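/- arXiv:2412.04589 — 2 statements merged into one kernel-verified Lean document; each statement's English description precedes it below -/
import Mathlib

section
/- Let (Ω, 𝓕, 𝔽 = (𝓕_t)_{t≥0}, P) be a filtered probability space satisfying the usual conditions. Let λ be a nonnegative 𝔽-progressively measurable process and Λ_t := ∫_0^t λ_s ds. Assume Λ_t < ∞ for all t ≥ 0 and Λ_∞ := lim_{t→∞} Λ_t = ∞, P-a.s. Let E be a random variable on Ω with the Exp(1) distribution, independent of 𝓕_∞. Define τ := inf{t > 0 : Λ_t ≥ E}, let 𝔸 = (𝓐_t)_{t≥0} with 𝓐_t := σ({τ ≤ s} : s ≤ t), and let 𝔾 be the right-continuous regularization of (𝓕_t ∨ 𝓐_t)_{t≥0}. Then: (a) the process (1_{{τ ≤ t}} − Λ_{τ∧t})_{t≥0} is a 𝔾-martingale, and (b) 𝔽 is immersed in 𝔾, i.e. every 𝔽-martingale with right-continuous sample paths is a 𝔾-martingale. -/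
open MeasureTheory ProbabilityTheory Filter Set
open scoped ENNReal Topology

noncomputable section

namespace InvMarkovJump

variable {Ω : Type*}

/-- `F` is a filtration (for times `t ≥ 0`) of sub-σ-algebras of `m0`. -/
def IsFiltration (m0 : MeasurableSpace Ω) (F : ℝ → MeasurableSpace Ω) : Prop :=
  (∀ s t : ℝ, 0 ≤ s → s ≤ t → F s ≤ F t) ∧ ∀ t : ℝ, F t ≤ m0

/-- The right-continuous regularization `(⋂_{s > t} F s)_{t ≥ 0}` of a filtration. -/
def rcReg (F : ℝ → MeasurableSpace Ω) : ℝ → MeasurableSpace Ω :=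
  fun t => ⨅ s ∈ Set.Ioi t, F s

/-- All sample paths of `M` are right-continuous (at every time `t ≥ 0`). -/
def RCPaths (M : ℝ → Ω → ℝ) : Prop :=
  ∀ ω, ∀ t : ℝ, 0 ≤ t → ContinuousWithinAt (fun s => M s ω) (Set.Ici t) t

/-- `M` is a martingale (for times `t ≥ 0`) with respect to the filtration `F`
under the measure `μ`: it is adapted, integrable, and `E[M_t | F_s] = M_s` a.s.
for all `0 ≤ s ≤ t`. -/
def IsMartingale {m0 : MeasurableSpace Ω} (μ : Measure Ω)
    (F : ℝ → MeasurableSpace Ω) (M : ℝ → Ω → ℝ) : Prop :=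
  (∀ t : ℝ, 0 ≤ t → Integrable (M t) μ) ∧
  (∀ t : ℝ, 0 ≤ t → Measurable[F t] (M t)) ∧
  ∀ s t : ℝ, 0 ≤ s → s ≤ t → μ[M t|F s] =ᵐ[μ] M s

/-- `F` is immersed in `G`: `F ⊆ G` and every `F`-martingale (with right-continuous
sample paths) is a `G`-martingale. -/
def Immersed {m0 : MeasurableSpace Ω} (μ : Measure Ω)
    (F G : ℝ → MeasurableSpace Ω) : Prop :=
  (∀ t : ℝ, 0 ≤ t → F t ≤ G t) ∧
  ∀ M : ℝ → Ω → ℝ, RCPaths M → IsMartingale μ F M → IsMartingale μ G M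

/-- The usual conditions: the filtration is right-continuous and `F 0` contains
all `μ`-null sets. -/
def UsualConditions {m0 : MeasurableSpace Ω} (μ : Measure Ω)
    (F : ℝ → MeasurableSpace Ω) : Prop :=
  IsFiltration m0 F ∧ (∀ t : ℝ, 0 ≤ t → F t = rcReg F t) ∧
    ∀ s : Set Ω, μ s = 0 → MeasurableSet[F 0] s

/-- `E` is `Exp(1)`-distributed: `P(E > x) = e^{-x}` for all `x ≥ 0`. -/
def IsExpOne {m0 : MeasurableSpace Ω} (μ : Measure Ω) (E : Ω → ℝ) : Prop :=
  Measurable E ∧ ∀ x : ℝ, 0 ≤ x → μ {ω | x < E ω} = ENNReal.ofReal (Real.exp (-x))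

/-- `F_∞ = ⋁_{t ≥ 0} F t`. -/
def Finfty (F : ℝ → MeasurableSpace Ω) : MeasurableSpace Ω :=
  ⨆ t ∈ Set.Ici (0:ℝ), F t

/-- The natural filtration `(σ(Y_s : 0 ≤ s ≤ t))_{t ≥ 0}` of a process `Y`. -/
def natFilt {β : Type*} [MeasurableSpace β] (Y : ℝ → Ω → β) : ℝ → MeasurableSpace Ω :=
  fun t => ⨆ s ∈ Set.Icc (0:ℝ) t, MeasurableSpace.comap (Y s) inferInstance

/-- Progressive measurability of a process `u` with respect to the filtration `F`:
for every `t ≥ 0`, `(s, ω) ↦ u s ω` on `[0, t] × Ω` is `B([0,t]) ⊗ F t`-measurable. -/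
def ProgMeas (F : ℝ → MeasurableSpace Ω) (u : ℝ → Ω → ℝ) : Prop :=
  ∀ t : ℝ, 0 ≤ t →
    Measurable[MeasurableSpace.prod inferInstance (F t)]
      (fun p : Set.Icc (0:ℝ) t × Ω => u p.1 p.2)

/-- Hitting times of a continuous increasing function. -/
lemma hit_aux (L : ℝ → ℝ) (hm : Monotone L) (hc : Continuous L) (h0 : L 0 = 0)
    (hinf : Tendsto L atTop atTop) (e : ℝ) (he : 0 < e) (τ : ℝ)
    (hτ : τ = sInf {t : ℝ | 0 < t ∧ e ≤ L t}) :
    0 < τ ∧ L τ = e ∧ ∀ t, τ ≤ t ↔ e ≤ L t := by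
  have hS : {t : ℝ | 0 < t ∧ e ≤ L t} = L ⁻¹' Ici e := by
    ext t
    simp only [mem_ofPred_eq, mem_preimage, mem_Ici, and_iff_right_iff_imp]
    intro h
    by_contra hn
    have := hm (not_lt.1 hn)
    linarith
  have hne : (L ⁻¹' Ici e).Nonempty := (hinf.eventually_ge_atTop e).exists
  have hbd : BddBelow (L ⁻¹' Ici e) := ⟨0, by
    rw [← hS]; rintro t ⟨h, -⟩; exact h.le⟩
  have hcl : IsClosed (L ⁻¹' Ici e) := isClosed_Ici.preimage hc
  rw [hS] at hτ
  have hmem : τ ∈ L ⁻¹' Ici e := hτ ▸ hcl.csInf_mem hne hbd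
  have hiff : ∀ t, τ ≤ t ↔ e ≤ L t := fun t =>
    ⟨fun h => le_trans hmem (hm h), fun h => hτ ▸ csInf_le hbd h⟩
  have hpos : 0 < τ := by
    rw [← hS] at hmem; exact hmem.1
  refine ⟨hpos, le_antisymm ?_ hmem, hiff⟩
  obtain ⟨t, ht, hte⟩ := intermediate_value_Icc hpos.le hc.continuousOn
    (show e ∈ Icc (L 0) (L τ) from ⟨by rw [h0]; exact he.le, hmem⟩)
  have : τ ≤ t := (hiff t).2 hte.ge
  have := hm this
  linarith

lemma prim_aux (l : ℝ → ℝ) (hn : ∀ s, 0 ≤ l s)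
    (hi : ∀ t : ℝ, IntegrableOn l (Set.Ioc 0 t) volume) :
    Monotone (fun t => ∫ s in Set.Ioc 0 t, l s) ∧
    Continuous (fun t => ∫ s in Set.Ioc 0 t, l s) := by
  constructor
  · intro a b hab
    exact setIntegral_mono_set (hi b) (ae_of_all _ hn)
      (Ioc_subset_Ioc_right hab).eventuallyLE
  · have hI : ∀ a b, IntervalIntegrable ((Ioi (0:ℝ)).indicator l) volume a b := by
      intro a b
      rw [intervalIntegrable_iff, IntegrableOn, integrable_indicator_iff measurableSet_Ioi,
        IntegrableOn, Measure.restrict_restrict measurableSet_Ioi]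
      refine (hi (max a b)).mono_set ?_
      rintro x ⟨hx, hx2⟩
      exact ⟨hx, hx2.2⟩
    have := intervalIntegral.continuous_primitive hI 0
    convert this using 2 with t
    rcases le_total 0 t with h | h
    · rw [intervalIntegral.integral_of_le h, setIntegral_indicator measurableSet_Ioi]
      congr 2
      ext x; simp only [mem_Ioc, mem_inter_iff, mem_Ioi]; tauto
    · rw [intervalIntegral.integral_of_ge h, setIntegral_indicator measurableSet_Ioi]
      have h1 : Ioc t 0 ∩ Ioi 0 = ∅ := by
        ext x; simp only [mem_Ioc, mem_inter_iff, mem_Ioi, mem_empty_iff_false]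
        constructor
        · rintro ⟨⟨_, h⟩, h'⟩; linarith
        · tauto
      rw [h1, Ioc_eq_empty (by linarith)]; simp

/-- Passing from `H` to the right-continuous regularization. -/
lemma rc_aux {m0 : MeasurableSpace Ω} (μ : Measure Ω) [IsProbabilityMeasure μ]
    (m : MeasurableSpace Ω) (H : ℕ → MeasurableSpace Ω) (hH : ∀ n, H n ≤ m0)
    (hm : ∀ n, m ≤ H n) (X Y : Ω → ℝ) (Z : ℕ → Ω → ℝ)
    (hX : Integrable X μ) (hY : Integrable Y μ) (hYm : Measurable[m] Y)
    (hZ : ∀ n, μ[X|H n] =ᵐ[μ] Z n)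
    (hlim : ∀ᵐ ω ∂μ, Tendsto (fun n => Z n ω) atTop (𝓝 (Y ω))) :
    μ[X|m] =ᵐ[μ] Y := by
  have hm0 : m ≤ m0 := (hm 0).trans (hH 0)
  have hZ' : ∀ᵐ ω ∂μ, ∀ n, (μ[X|H n]) ω = Z n ω := ae_all_iff.2 hZ
  have hL := tendsto_Lp_finite_of_tendsto_ae (μ := μ) (p := 1) le_rfl (by simp)
    (f := fun n => μ[X|H n]) (g := Y)
    (fun n => integrable_condExp.aestronglyMeasurable) (memLp_one_iff_integrable.2 hY)
    (hX.uniformIntegrable_condExp hH).2.1 (by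
      filter_upwards [hZ', hlim] with ω h1 h2
      simpa only [h1] using h2)
  symm
  refine ae_eq_condExp_of_forall_setIntegral_eq hm0 hX (fun _ _ _ => hY.integrableOn) ?_
    hYm.stronglyMeasurable.aestronglyMeasurable
  intro B hB _
  have := tendsto_setIntegral_of_L1' Y hY.aestronglyMeasurable
    (Eventually.of_forall fun n => integrable_condExp) hL B
  have h2 : ∀ n, ∫ ω in B, (μ[X|H n]) ω ∂μ = ∫ ω in B, X ω ∂μ := fun n =>
    setIntegral_condExp (hH n) hX (hm n _ hB)
  simp only [h2] at this
  exact tendsto_nhds_unique this tendsto_const_nhds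

/-- Enlarging by an independent sigma-algebra. -/
lemma indep_aux {m0 : MeasurableSpace Ω} (μ : Measure Ω) [IsProbabilityMeasure μ]
    (f e Finf : MeasurableSpace Ω) (hf : f ≤ Finf) (hFinf : Finf ≤ m0) (he : e ≤ m0)
    (hind : Indep e Finf μ) (X Y : Ω → ℝ) (hX : Integrable X μ) (hXm : Measurable[Finf] X)
    (hYm : Measurable[f] Y) (hXY : μ[X|f] =ᵐ[μ] Y) : μ[X|f ⊔ e] =ᵐ[μ] Y := by
  have hY : Integrable Y μ := integrable_condExp.congr hXY
  have hfm : f ≤ m0 := hf.trans hFinf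
  have hle : f ⊔ e ≤ m0 := sup_le hfm he
  have hYs : Measurable[f ⊔ e] Y := hYm.mono le_sup_left le_rfl
  symm
  refine ae_eq_condExp_of_forall_setIntegral_eq hle hX (fun _ _ _ => hY.integrableOn) ?_
    hYs.stronglyMeasurable.aestronglyMeasurable
  intro B hB _
  have hgen : f ⊔ e = MeasurableSpace.generateFrom
      {C | ∃ A D, MeasurableSet[f] A ∧ MeasurableSet[e] D ∧ C = A ∩ D} := by
    apply le_antisymm
    · refine sup_le ?_ ?_
      · intro A hA
        exact MeasurableSpace.measurableSet_generateFrom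
          ⟨A, univ, hA, MeasurableSet.univ, by simp⟩
      · intro A hA
        exact MeasurableSpace.measurableSet_generateFrom
          ⟨univ, A, MeasurableSet.univ, hA, by simp⟩
    · apply MeasurableSpace.generateFrom_le
      rintro _ ⟨A, D, hA, hD, rfl⟩
      have h1 : MeasurableSet[f ⊔ e] A := (le_sup_left : f ≤ f ⊔ e) _ hA
      have h2 : MeasurableSet[f ⊔ e] D := (le_sup_right : e ≤ f ⊔ e) _ hD
      exact h1.inter h2
  have hpi : IsPiSystem {C | ∃ A D, MeasurableSet[f] A ∧ MeasurableSet[e] D ∧ C = A ∩ D} := by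
    rintro _ ⟨A, D, hA, hD, rfl⟩ _ ⟨A', D', hA', hD', rfl⟩ _
    exact ⟨A ∩ A', D ∩ D', hA.inter hA', hD.inter hD', by
      ext x; simp only [mem_inter_iff]; tauto⟩
  have key : ∀ W : Ω → ℝ, Measurable[Finf] W → ∀ A D, MeasurableSet[f] A → MeasurableSet[e] D →
      ∫ ω in A ∩ D, W ω ∂μ = μ.real D * ∫ ω in A, W ω ∂μ := by
    intro W hWm A D hA hD
    have hA' := hfm _ hA
    have hD' := he _ hD
    have hWA : Measurable[Finf] (A.indicator W) := hWm.indicator (hf _ hA)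
    have hi : IndepFun (D.indicator (fun _ => (1:ℝ))) (A.indicator W) μ := by
      rw [IndepFun_iff_Indep]
      refine indep_of_indep_of_le_left (indep_of_indep_of_le_right hind ?_) ?_
      · exact hWA.comap_le
      · exact (Measurable.indicator (m := e) measurable_const hD).comap_le
    have := hi.integral_fun_mul_eq_mul_integral
      ((measurable_const.indicator hD').aestronglyMeasurable)
      ((hWA.mono hFinf le_rfl).aestronglyMeasurable)
    rw [integral_indicator_const _ hD', integral_indicator hA', smul_eq_mul, mul_one] at this
    rw [← this, ← integral_indicator (hA'.inter hD')]
    congr 1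
    ext ω
    by_cases h1 : ω ∈ A <;> by_cases h2 : ω ∈ D <;> simp [h1, h2]
  have hYF : Measurable[Finf] Y := hYm.mono hf le_rfl
  have hAll : ∀ A, MeasurableSet[f] A → ∫ ω in A, Y ω ∂μ = ∫ ω in A, X ω ∂μ := by
    intro A hA
    rw [← setIntegral_condExp hfm hX hA]
    exact setIntegral_congr_ae (hfm _ hA) (hXY.symm.mono fun ω h _ => h)
  have huniv : ∫ ω, Y ω ∂μ = ∫ ω, X ω ∂μ := by
    simpa using hAll univ MeasurableSet.univ
  induction B, hB using MeasurableSpace.induction_on_inter hgen hpi with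
  | empty => simp
  | basic t ht =>
    obtain ⟨A, D, hA, hD, rfl⟩ := ht
    rw [key Y hYF A D hA hD, key X hXm A D hA hD, hAll A hA]
  | compl t htm ih =>
    have ih := ih (measure_lt_top _ _)
    have h1 := integral_add_compl (hle _ htm) hY
    have h2 := integral_add_compl (hle _ htm) hX
    linarith
  | iUnion g hd hg ih =>
    rw [integral_iUnion (fun i => hle _ (hg i)) hd hY.integrableOn,
      integral_iUnion (fun i => hle _ (hg i)) hd hX.integrableOn]
    exact tsum_congr fun i => ih i (measure_lt_top _ _)

lemma complete_aux {m0 : MeasurableSpace Ω} (μ : Measure Ω) (m : MeasurableSpace Ω)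
    (hnull : ∀ s : Set Ω, μ s = 0 → MeasurableSet[m] s) (B C : Set Ω)
    (h : ∀ᵐ ω ∂μ, ω ∈ B ↔ ω ∈ C) (hC : MeasurableSet[m] C) : MeasurableSet[m] B := by
  have h0 : μ {ω | ¬ (ω ∈ B ↔ ω ∈ C)} = 0 := h
  have h1 : MeasurableSet[m] (C \ B) :=
    hnull _ (measure_mono_null (fun ω hω => by
      simp only [mem_ofPred_eq]; intro h; exact hω.2 (h.2 hω.1)) h0)
  have h2 : MeasurableSet[m] (B \ C) :=
    hnull _ (measure_mono_null (fun ω hω => by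
      simp only [mem_ofPred_eq]; intro h; exact hω.2 (h.1 hω.1)) h0)
  have : B = (C \ (C \ B)) ∪ (B \ C) := by
    ext x; simp only [mem_union, Set.mem_sdiff]; tauto
  rw [this]
  exact (hC.diff h1).union h2

lemma exp_law {m0 : MeasurableSpace Ω} (μ : Measure Ω) [IsProbabilityMeasure μ]
    (E : Ω → ℝ) (hE : IsExpOne μ E) : μ.map E = expMeasure 1 := by
  have := isProbabilityMeasure_expMeasure (r := 1) one_pos
  have : IsProbabilityMeasure (μ.map E) := Measure.isProbabilityMeasure_map hE.1.aemeasurable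
  apply Measure.eq_of_cdf
  ext x
  rw [cdf_expMeasure_eq one_pos, cdf_eq_real, map_measureReal_apply hE.1 measurableSet_Iic]
  have h1 : E ⁻¹' Iic x = {ω | x < E ω}ᶜ := by ext ω; simp
  have hms : ∀ y, MeasurableSet {ω | y < E ω} := fun y => measurableSet_lt measurable_const hE.1
  rw [h1, probReal_compl_eq_one_sub (hms x)]
  have hr : ∀ y : ℝ, 0 ≤ y → μ.real {ω | y < E ω} = Real.exp (-y) := fun y hy => by
    rw [Measure.real, hE.2 y hy, ENNReal.toReal_ofReal (Real.exp_pos _).le]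
  split_ifs with h
  · rw [hr x h]; simp
  · have h2 : μ.real {ω | (0:ℝ) < E ω} ≤ μ.real {ω | x < E ω} :=
      measureReal_mono fun ω hω => lt_trans (not_le.1 h) hω
    rw [hr 0 le_rfl] at h2
    have h3 : μ.real {ω | x < E ω} ≤ 1 := measureReal_le_one
    simp only [neg_zero, Real.exp_zero] at h2
    linarith

lemma exp_integral (f : ℝ → ℝ) :
    ∫ x, f x ∂(expMeasure 1) = ∫ x, (if 0 ≤ x then Real.exp (-x) else 0) * f x := by
  have : expMeasure 1 = volume.withDensity (exponentialPDF 1) := rfl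
  have hmeas : Measurable (exponentialPDF 1) :=
    (measurable_exponentialPDFReal 1).ennreal_ofReal
  rw [this, integral_withDensity_eq_integral_toReal_smul hmeas
    (ae_of_all _ fun x => by simp [exponentialPDF])]
  congr 1
  ext x
  rw [exponentialPDF_eq, ENNReal.toReal_ofReal, smul_eq_mul]
  · simp
  · split_ifs <;> positivity

lemma exp_integrable_id : Integrable (fun x : ℝ => x) (expMeasure 1) := by
  have : expMeasure 1 = volume.withDensity (exponentialPDF 1) := rfl
  have hmeas : Measurable (exponentialPDF 1) :=
    (measurable_exponentialPDFReal 1).ennreal_ofReal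
  rw [this, integrable_withDensity_iff hmeas (ae_of_all _ fun x => by simp [exponentialPDF])]
  have h := Real.GammaIntegral_convergent (s := 2) (by norm_num)
  rw [← integrable_indicator_iff measurableSet_Ioi] at h
  refine h.congr (ae_of_all _ fun x => ?_)
  simp only [indicator, mem_Ioi]
  rw [exponentialPDF_eq, ENNReal.toReal_ofReal (by split_ifs <;> positivity)]
  split_ifs with h1 h2 h2
  · norm_num; ring
  · linarith
  · have : x = 0 := by linarith
    simp [this]
  · simp

/-- The integrand appearing in the compensator identity. -/
def phi (a b x : ℝ) : ℝ := if a < x then (if x ≤ b then 1 else 0) - min x b + a else 0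

lemma phi_integral (a b : ℝ) (ha : 0 ≤ a) (hab : a ≤ b) :
    ∫ x, phi a b x ∂(expMeasure 1) = 0 := by
  rw [exp_integral]
  have h1 : (fun x => (if 0 ≤ x then Real.exp (-x) else 0) * phi a b x) =
      fun x => (Ioc a b).indicator (fun x => (1 - x + a) * Real.exp (-x)) x +
        (Ioi b).indicator (fun x => (a - b) * Real.exp (-x)) x := by
    ext x
    unfold phi
    by_cases h1 : a < x
    · by_cases h2 : x ≤ b
      · have : ¬ b < x := not_lt.2 h2
        have h0 : 0 ≤ x := by linarith
        simp [h1, h2, indicator, this, h0]; ring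
      · have h3 : b < x := not_le.1 h2
        have h0 : 0 ≤ x := by linarith
        simp [h1, h2, indicator, h3, h0, h3.le]; ring
    · have : ¬ b < x := by linarith [not_lt.1 h1]
      simp [h1, indicator, this]
  have hc : Continuous (fun x : ℝ => (1 - x + a) * Real.exp (-x)) := by fun_prop
  have hI2 : IntegrableOn (fun x => (a - b) * Real.exp (-x)) (Ioi b) :=
    (integrableOn_exp_neg_Ioi b).const_mul _
  rw [h1, integral_add, integral_indicator measurableSet_Ioc, integral_indicator measurableSet_Ioi,
    integral_const_mul, integral_exp_neg_Ioi, ← intervalIntegral.integral_of_le hab,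
    intervalIntegral.integral_eq_sub_of_hasDerivAt
      (f := fun x => (x - a) * Real.exp (-x))]
  · ring
  · intro x _
    have := ((hasDerivAt_id x).sub_const a).mul ((hasDerivAt_neg x).exp)
    convert! this using 1
    simp; ring
  · exact hc.intervalIntegrable _ _
  · rw [integrable_indicator_iff measurableSet_Ioc]
    exact (hc.integrableOn_Icc).mono_set Ioc_subset_Icc_self
  · rw [integrable_indicator_iff measurableSet_Ioi]; exact hI2

lemma phi_bound (a b x : ℝ) (ha : 0 ≤ a) (hab : a ≤ b) : |phi a b x| ≤ 1 + |x| := by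
  unfold phi
  have := le_abs_self x
  have h0 := abs_nonneg x
  rw [abs_le]
  split_ifs with h1 h2
  · rw [min_eq_left h2]; constructor <;> linarith
  · rw [min_eq_right (not_le.1 h2).le]; constructor <;> linarith [not_le.1 h2]
  · constructor <;> linarith

lemma phi_indep (Finf : MeasurableSpace Ω) {m0 : MeasurableSpace Ω} (μ : Measure Ω)
    [IsProbabilityMeasure μ] (E : Ω → ℝ) (hE : IsExpOne μ E) (hFinf : Finf ≤ m0)
    (hind : Indep (MeasurableSpace.comap E inferInstance) Finf μ)
    (a b : Ω → ℝ) (ham : Measurable[Finf] a) (hbm : Measurable[Finf] b)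
    (ha : ∀ ω, 0 ≤ a ω) (hab : ∀ᵐ ω ∂μ, a ω ≤ b ω) (A : Set Ω) (hA : MeasurableSet[Finf] A) :
    ∫ ω in A, phi (a ω) (b ω) (E ω) ∂μ = 0 := by
  have hA' := hFinf _ hA
  let c : Ω → ℝ := A.indicator (fun _ => 1)
  have hcm : Measurable[Finf] c := Measurable.indicator (m := Finf) measurable_const hA
  let Y : Ω → ℝ × ℝ × ℝ := fun ω => (a ω, b ω, c ω)
  have hYm : Measurable[Finf] Y := ham.prodMk (hbm.prodMk hcm)
  have hYm0 : Measurable Y := hYm.mono hFinf le_rfl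
  have hi : IndepFun E Y μ := by
    rw [IndepFun_iff_Indep]
    exact indep_of_indep_of_le_right hind hYm.comap_le
  let ψ : ℝ × (ℝ × ℝ × ℝ) → ℝ := fun p =>
    p.2.2.2 * phi (max p.2.1 0) (max (max p.2.1 0) p.2.2.1) p.1
  have hψm : Measurable ψ := by
    refine Measurable.mul (by fun_prop) ?_
    unfold phi
    refine Measurable.ite (measurableSet_lt (by fun_prop) (by fun_prop)) ?_ measurable_const
    refine Measurable.add (Measurable.sub ?_ (by fun_prop)) (by fun_prop)
    exact Measurable.ite (measurableSet_le (by fun_prop) (by fun_prop))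
      measurable_const measurable_const
  have hEint : Integrable E μ := by
    have := exp_integrable_id
    rw [← exp_law μ E hE] at this
    exact (integrable_map_measure (by fun_prop) hE.1.aemeasurable).1 this
  have hmap := (indepFun_iff_map_prod_eq_prod_map_map hE.1.aemeasurable hYm0.aemeasurable).1 hi
  have hpm : Measurable (fun ω => (E ω, Y ω)) := hE.1.prodMk hYm0
  have hψi : Integrable (fun ω => ψ (E ω, Y ω)) μ := by
    refine ((integrable_const (1:ℝ)).add hEint.abs).mono'
      (hψm.comp hpm).aestronglyMeasurable (ae_of_all _ fun ω => ?_)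
    simp only [ψ, Y, Real.norm_eq_abs, abs_mul, Pi.add_apply]
    have hc : |c ω| ≤ 1 := by
      by_cases h : ω ∈ A <;> simp [c, h]
    have := phi_bound (max (a ω) 0) (max (max (a ω) 0) (b ω)) (E ω) (le_max_right _ _)
      (le_max_left _ _)
    calc _ ≤ 1 * (1 + |E ω|) := by gcongr
      _ = _ := one_mul _
  have hψi' : Integrable ψ ((μ.map E).prod (μ.map Y)) := by
    rw [← hmap]
    exact (integrable_map_measure hψm.aestronglyMeasurable hpm.aemeasurable).2 hψi
  have h1 : ∫ ω in A, phi (a ω) (b ω) (E ω) ∂μ = ∫ ω, ψ (E ω, Y ω) ∂μ := by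
    rw [← integral_indicator hA']
    refine integral_congr_ae ?_
    filter_upwards [hab] with ω hω
    simp only [ψ, Y, max_eq_left (ha ω), max_eq_right hω]
    by_cases h : ω ∈ A <;> simp [c, h]
  have : IsProbabilityMeasure (μ.map E) := Measure.isProbabilityMeasure_map hE.1.aemeasurable
  have : IsProbabilityMeasure (μ.map Y) := Measure.isProbabilityMeasure_map hYm0.aemeasurable
  rw [h1, ← integral_map hpm.aemeasurable hψm.aestronglyMeasurable, hmap,
    integral_prod_symm _ hψi']
  simp only [ψ, integral_const_mul, exp_law μ E hE]
  simp only [phi_integral _ _ (le_max_right _ _) (le_max_left _ _), mul_zero, integral_zero]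

lemma meas_aux {m : MeasurableSpace Ω} (lam : ℝ → Ω → ℝ) (t : ℝ) (ht : 0 ≤ t)
    (hl : Measurable (fun p : Set.Icc (0:ℝ) t × Ω => lam p.1 p.2))
    (σ : Ω → ℝ) (hσ : Measurable σ) (hσt : ∀ ω, σ ω ≤ t) :
    Measurable (fun ω => ∫ s in Set.Ioc 0 (σ ω), lam s ω) := by
  let h : ℝ × Ω → ℝ := fun p => if 0 < p.1 ∧ p.1 ≤ σ p.2 then lam (projIcc 0 t ht p.1) p.2 else 0
  have hh : Measurable h := by
    refine Measurable.ite ?_ ?_ measurable_const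
    · exact (measurableSet_lt measurable_const measurable_fst).inter
        (measurableSet_le measurable_fst (hσ.comp measurable_snd))
    · exact hl.comp (((continuous_projIcc (h := ht)).measurable.comp measurable_fst).prodMk measurable_snd)
  have := (hh.stronglyMeasurable.integral_prod_left' (μ := (volume : Measure ℝ))).measurable
  convert this using 2 with ω
  rw [← integral_indicator measurableSet_Ioc]
  congr 1
  ext s
  simp only [h, indicator, mem_Ioc]
  by_cases hs : 0 < s ∧ s ≤ σ ω
  · rw [if_pos hs, if_pos hs, projIcc_of_mem ht ⟨hs.1.le, hs.2.trans (hσt ω)⟩]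
  · rw [if_neg hs, if_neg hs]

lemma trace_aux (f a : MeasurableSpace Ω) (T : Set Ω)
    (ha : ∀ B, MeasurableSet[a] B → ∃ C, MeasurableSet[f] C ∧ ∀ ω ∈ T, ω ∈ B ↔ ω ∈ C)
    (B : Set Ω) (hB : MeasurableSet[f ⊔ a] B) :
    ∃ C, MeasurableSet[f] C ∧ ∀ ω ∈ T, ω ∈ B ↔ ω ∈ C := by
  let m : MeasurableSpace Ω :=
    { MeasurableSet' := fun B => ∃ C, MeasurableSet[f] C ∧ ∀ ω ∈ T, ω ∈ B ↔ ω ∈ C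
      measurableSet_empty := ⟨∅, @MeasurableSet.empty _ f, fun _ _ => Iff.rfl⟩
      measurableSet_compl := by
        rintro B ⟨C, hC, h⟩
        exact ⟨Cᶜ, hC.compl, fun ω hω => not_congr (h ω hω)⟩
      measurableSet_iUnion := by
        intro g hg
        choose C hC h using hg
        refine ⟨⋃ i, C i, MeasurableSet.iUnion hC, fun ω hω => ?_⟩
        simp only [mem_iUnion]
        exact exists_congr fun i => h i ω hω }
  have hle : f ⊔ a ≤ m := sup_le (fun B hB => ⟨B, hB, fun _ _ => Iff.rfl⟩) (fun B hB => ha B hB)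
  exact hle B hB

lemma trace_gen (f : MeasurableSpace Ω) (T : Set Ω) (S : Set (Set Ω))
    (hS : ∀ B ∈ S, ∀ ω ∈ T, ω ∉ B) (B : Set Ω)
    (hB : MeasurableSet[MeasurableSpace.generateFrom S] B) :
    ∃ C, MeasurableSet[f] C ∧ ∀ ω ∈ T, ω ∈ B ↔ ω ∈ C := by
  induction B, hB using MeasurableSpace.generateFrom_induction with
  | hC t ht _ => exact ⟨∅, @MeasurableSet.empty _ f, fun ω hω => by simp [hS t ht ω hω]⟩
  | empty => exact ⟨∅, @MeasurableSet.empty _ f, fun _ _ => Iff.rfl⟩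
  | compl t _ ih =>
    obtain ⟨C, hC, h⟩ := ih
    exact ⟨Cᶜ, hC.compl, fun ω hω => not_congr (h ω hω)⟩
  | iUnion g _ ih =>
    choose C hC h using ih
    refine ⟨⋃ i, C i, MeasurableSet.iUnion hC, fun ω hω => ?_⟩
    simp only [mem_iUnion]
    exact exists_congr fun i => h i ω hω

/-- Right continuity of the compensated process. -/
lemma rc_path (L : ℝ → ℝ) (hc : Continuous L) (τ s : ℝ) :
    ContinuousWithinAt (fun t => (if τ ≤ t then (1:ℝ) else 0) - L (min τ t)) (Ici s) s := by
  refine ContinuousWithinAt.sub ?_ (by fun_prop)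
  by_cases h : τ ≤ s
  · refine (continuousWithinAt_const (b := (1:ℝ))).congr (fun u hu => ?_) ?_
    · exact if_pos (h.trans hu)
    · exact if_pos h
  · have : ContinuousAt (fun t => if τ ≤ t then (1:ℝ) else 0) s := by
      refine (continuousAt_const (y := (0:ℝ))).congr ?_
      filter_upwards [Iio_mem_nhds (not_le.1 h)] with u hu
      rw [if_neg (not_le.2 hu)]
    exact this.continuousWithinAt

lemma mle_aux {m : MeasurableSpace Ω} (f g : Ω → ℝ) (hf : Measurable f) (hg : Measurable g) :
    MeasurableSet {ω | f ω ≤ g ω} := measurableSet_le hf hg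

lemma mempty_aux {m : MeasurableSpace Ω} (B : Set Ω) (h : B = ∅) : MeasurableSet B := by
  rw [h]; exact MeasurableSet.empty

lemma tau_aux {m : MeasurableSpace Ω} (τ : Ω → ℝ) (t : ℝ)
    (hτs : ∀ s, s ≤ t → MeasurableSet {ω | τ ω ≤ s}) :
    Measurable (fun ω => min (τ ω) t) ∧ Measurable (fun ω => if τ ω ≤ t then (1:ℝ) else 0) := by
  constructor
  · refine measurable_of_Iic ?_
    intro s
    by_cases hst : t ≤ s
    · have : (fun ω => min (τ ω) t) ⁻¹' Iic s = univ := by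
        ext ω; simp [hst]
      rw [this]; exact MeasurableSet.univ
    · have : (fun ω => min (τ ω) t) ⁻¹' Iic s = {ω | τ ω ≤ s} := by
        ext ω; simp [hst]
      rw [this]; exact hτs s (not_le.1 hst).le
  · exact Measurable.ite (hτs t le_rfl) measurable_const measurable_const

/-- The Cox construction with one jump time and unit jump size:
`(1_{τ ≤ t} − Λ_{τ ∧ t})_t` is a `G`-martingale and `F` is immersed in `G`. -/
theorem cox_one_jump {m0 : MeasurableSpace Ω} (μ : Measure Ω) [IsProbabilityMeasure μ]
    (F : ℝ → MeasurableSpace Ω) (hUC : UsualConditions μ F)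
    (lam : ℝ → Ω → ℝ) (hprog : ProgMeas F lam)
    (hnonneg : ∀ s ω, 0 ≤ lam s ω)
    (hfin : ∀ᵐ ω ∂μ, ∀ t : ℝ, IntegrableOn (fun s => lam s ω) (Set.Ioc 0 t) volume)
    (hinf : ∀ᵐ ω ∂μ, Tendsto (fun t => ∫ s in Set.Ioc 0 t, lam s ω) atTop atTop)
    (E : Ω → ℝ) (hE : IsExpOne μ E)
    (hEindep : Indep (MeasurableSpace.comap E inferInstance) (Finfty F) μ)
    (τ : Ω → ℝ)
    (hτ : ∀ ω, τ ω = sInf {t : ℝ | 0 < t ∧ E ω ≤ ∫ s in Set.Ioc 0 t, lam s ω})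
    (A : ℝ → MeasurableSpace Ω)
    (hA : ∀ t : ℝ, A t =
      MeasurableSpace.generateFrom {B | ∃ s : ℝ, 0 ≤ s ∧ s ≤ t ∧ B = {ω | τ ω ≤ s}})
    (G : ℝ → MeasurableSpace Ω)
    (hG : ∀ t : ℝ, G t = rcReg (fun u => F u ⊔ A u) t) :
    IsMartingale μ G (fun t ω =>
      (if τ ω ≤ t then (1:ℝ) else 0) - ∫ s in Set.Ioc 0 (min (τ ω) t), lam s ω) ∧
    Immersed μ F G := by
  obtain ⟨⟨hFmono, hFle⟩, hFrc, hFnull⟩ := hUC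
  have hElaw := exp_law μ E hE
  have hEint : Integrable E μ := by
    have := exp_integrable_id
    rw [← hElaw] at this
    exact (integrable_map_measure (by fun_prop) hE.1.aemeasurable).1 this
  have hEpos : ∀ᵐ ω ∂μ, 0 < E ω := by
    have h := hE.2 0 le_rfl
    simp only [neg_zero, Real.exp_zero, ENNReal.ofReal_one] at h
    exact (mem_ae_iff_prob_eq_one (measurableSet_lt measurable_const hE.1)).2 h
  let Lam : ℝ → Ω → ℝ := fun t ω => ∫ s in Set.Ioc 0 t, lam s ω
  have hLam0 : ∀ t ω, 0 ≤ Lam t ω := fun t ω => integral_nonneg fun s => hnonneg s ω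
  have hgood : ∀ᵐ ω ∂μ, (Monotone fun t => Lam t ω) ∧ (Continuous fun t => Lam t ω) ∧
      0 < τ ω ∧ Lam (τ ω) ω = E ω ∧ ∀ t, τ ω ≤ t ↔ E ω ≤ Lam t ω := by
    filter_upwards [hfin, hinf, hEpos] with ω h1 h2 h3
    obtain ⟨h4, h5⟩ := prim_aux (fun s => lam s ω) (fun s => hnonneg s ω) h1
    exact ⟨h4, h5, hit_aux (fun t => Lam t ω) h4 h5 (by simp [Lam]) h2 _ h3 _ (hτ ω)⟩
  have hprodle : ∀ (t : ℝ) (m : MeasurableSpace Ω), 0 ≤ t → F t ≤ m →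
      Measurable[MeasurableSpace.prod inferInstance m]
        (fun p : Set.Icc (0:ℝ) t × Ω => lam p.1 p.2) := by
    intro t m ht hm
    exact (hprog t ht).mono (sup_le_sup le_rfl (MeasurableSpace.comap_mono hm)) le_rfl
  have hLamF : ∀ t, 0 ≤ t → Measurable[F t] (Lam t) := fun t ht =>
    meas_aux (m := F t) lam t ht (hprog t ht) (fun _ => t) measurable_const (fun _ => le_rfl)
  have hnull : ∀ t, 0 ≤ t → ∀ m, F t ≤ m → ∀ s : Set Ω, μ s = 0 → MeasurableSet[m] s :=
    fun t ht m hm s hs => hm _ (hFmono 0 t le_rfl ht _ (hFnull s hs))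
  let e : MeasurableSpace Ω := MeasurableSpace.comap E inferInstance
  have he : e ≤ m0 := hE.1.comap_le
  have heE : Measurable[e] E := comap_measurable E
  have hAe : ∀ u, 0 ≤ u → A u ≤ F u ⊔ e := by
    intro u hu
    rw [hA u]
    apply MeasurableSpace.generateFrom_le
    rintro _ ⟨s, hs, hsu, rfl⟩
    refine complete_aux μ (F u ⊔ e) (hnull u hu _ le_sup_left) _ {ω | E ω ≤ Lam s ω} ?_ ?_
    · filter_upwards [hgood] with ω h
      exact h.2.2.2.2 s
    · have h1 : Measurable[F u ⊔ e] E := heE.mono le_sup_right le_rfl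
      have h2 : Measurable[F u ⊔ e] (Lam s) :=
        (hLamF s hs).mono ((hFmono s u hs hsu).trans le_sup_left) le_rfl
      exact mle_aux (m := F u ⊔ e) _ _ h1 h2
  have hAmono : ∀ s u, s ≤ u → A s ≤ A u := by
    intro s u hsu
    rw [hA s, hA u]
    apply MeasurableSpace.generateFrom_mono
    rintro _ ⟨r, hr, hrs, rfl⟩
    exact ⟨r, hr, hrs.trans hsu, rfl⟩
  have hHK : ∀ u, 0 ≤ u → F u ⊔ A u ≤ F u ⊔ e := fun u hu => sup_le le_sup_left (hAe u hu)
  have hHm0 : ∀ u, 0 ≤ u → F u ⊔ A u ≤ m0 := fun u hu => (hHK u hu).trans (sup_le (hFle u) he)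
  have hGH : ∀ s u, s < u → G s ≤ F u ⊔ A u := by
    intro s u hsu
    rw [hG s]
    exact iInf₂_le u hsu
  have hHG : ∀ s, 0 ≤ s → F s ⊔ A s ≤ G s := by
    intro s hs
    rw [hG s]
    exact le_iInf₂ fun u hu => sup_le_sup (hFmono s u hs (le_of_lt hu)) (hAmono s u (le_of_lt hu))
  have hGm0 : ∀ s, 0 ≤ s → G s ≤ m0 := fun s hs =>
    (hGH s (s+1) (by linarith)).trans (hHm0 _ (by linarith))
  have hFinf : ∀ s, 0 ≤ s → F s ≤ Finfty F := fun s hs =>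
    le_iSup₂ (f := fun (t : ℝ) (_ : t ∈ Set.Ici (0:ℝ)) => F t) s hs
  have hFinfm0 : Finfty F ≤ m0 := iSup₂_le fun t _ => hFle t
  -- from `H` to `G`
  have toG : ∀ M : ℝ → Ω → ℝ, (∀ t : ℝ, 0 ≤ t → Integrable (M t) μ) →
      (∀ t : ℝ, 0 ≤ t → Measurable[F t ⊔ A t] (M t)) →
      (∀ᵐ ω ∂μ, ∀ t : ℝ, 0 ≤ t → ContinuousWithinAt (fun s => M s ω) (Set.Ici t) t) →
      (∀ s t : ℝ, 0 ≤ s → s ≤ t → μ[M t|F s ⊔ A s] =ᵐ[μ] M s) → IsMartingale μ G M := by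
    intro M hMi hMm hMrc hMc
    have hMG : ∀ t : ℝ, 0 ≤ t → Measurable[G t] (M t) := fun t ht =>
      (hMm t ht).mono (hHG t ht) le_rfl
    refine ⟨hMi, hMG, ?_⟩
    intro s t hs hst
    rcases hst.eq_or_lt with rfl | hlt
    · exact (condExp_of_stronglyMeasurable (hGm0 s hs) (hMG s hs).stronglyMeasurable
        (hMi s hs)).eventuallyEq
    · let u : ℕ → ℝ := fun n => s + (t - s) * (1 / ((n:ℝ) + 1))
      have hpos : ∀ n : ℕ, 0 < 1 / ((n:ℝ) + 1) := fun n => Nat.one_div_pos_of_nat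
      have hus : ∀ n, s < u n := fun n => by
        have := mul_pos (sub_pos.2 hlt) (hpos n)
        simp only [u]; linarith
      have hut : ∀ n, u n ≤ t := fun n => by
        have h1 : 1 / ((n:ℝ) + 1) ≤ 1 := by
          rw [div_le_one (by positivity)]
          have : (0:ℝ) ≤ n := Nat.cast_nonneg n
          linarith
        have := mul_le_mul_of_nonneg_left h1 (sub_pos.2 hlt).le
        simp only [u]; linarith
      have hu0 : ∀ n, 0 ≤ u n := fun n => hs.trans (hus n).le
      have hulim : Tendsto u atTop (𝓝 s) := by
        have := (tendsto_one_div_add_atTop_nhds_zero_nat (𝕜 := ℝ)).const_mul (t - s)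
        simpa [u] using this.const_add s
      refine rc_aux μ (G s) (fun n => F (u n) ⊔ A (u n)) (fun n => hHm0 _ (hu0 n))
        (fun n => hGH s _ (hus n)) (M t) (M s) (fun n => M (u n)) (hMi t (hs.trans hst))
        (hMi s hs) (hMG s hs) (fun n => hMc _ _ (hu0 n) (hut n)) ?_
      filter_upwards [hMrc] with ω h
      exact (h s hs).tendsto.comp (tendsto_nhdsWithin_iff.2
        ⟨hulim, Eventually.of_forall fun n => (hus n).le⟩)
  refine ⟨?_, fun t ht => le_sup_left.trans (hHG t ht), ?_⟩
  · have hMm : ∀ t : ℝ, 0 ≤ t → Measurable[F t ⊔ A t] (fun ω =>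
        (if τ ω ≤ t then (1:ℝ) else 0) - ∫ s in Set.Ioc 0 (min (τ ω) t), lam s ω) := by
      intro t ht
      have hτs : ∀ s, s ≤ t → MeasurableSet[F t ⊔ A t] {ω | τ ω ≤ s} := by
        intro s hst
        by_cases hs : 0 ≤ s
        · refine (le_sup_right : A t ≤ F t ⊔ A t) _ ?_
          rw [hA t]
          exact MeasurableSpace.measurableSet_generateFrom ⟨s, hs, hst, rfl⟩
        · have : {ω | τ ω ≤ s} = ∅ := by
            ext ω
            simp only [mem_ofPred_eq, mem_empty_iff_false, iff_false, not_le]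
            refine (not_le.1 hs).trans_le ?_
            rw [hτ ω]
            exact Real.sInf_nonneg fun x hx => hx.1.le
          exact mempty_aux (m := F t ⊔ A t) _ this
      obtain ⟨hσ, h2⟩ := tau_aux (m := F t ⊔ A t) τ t hτs
      have h1 := meas_aux (m := F t ⊔ A t) lam t ht (hprodle t _ ht le_sup_left)
        (fun ω => min (τ ω) t) hσ (fun ω => min_le_right _ _)
      exact h2.sub h1
    have hMval : ∀ᵐ ω ∂μ, ∀ t, (if τ ω ≤ t then (1:ℝ) else 0)
        - ∫ s in Set.Ioc 0 (min (τ ω) t), lam s ω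
        = (if E ω ≤ Lam t ω then (1:ℝ) else 0) - min (E ω) (Lam t ω) := by
      filter_upwards [hgood] with ω ⟨hmo, hc, hp, hEq, hiff⟩ t
      have h1 := hmo.map_min (a := τ ω) (b := t)
      simp only [hEq] at h1
      rw [← h1]
      simp only [hiff t, Lam]
    have hMi : ∀ t : ℝ, 0 ≤ t → Integrable (fun ω =>
        (if τ ω ≤ t then (1:ℝ) else 0) - ∫ s in Set.Ioc 0 (min (τ ω) t), lam s ω) μ := by
      intro t ht
      refine ((integrable_const (1:ℝ)).add hEint.abs).mono'
        ((hMm t ht).mono (hHm0 t ht) le_rfl).aestronglyMeasurable ?_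
      filter_upwards [hMval, hEpos] with ω h hp
      rw [h t, Real.norm_eq_abs]
      simp only [Pi.add_apply]
      rw [abs_of_pos hp, abs_le]
      have h1 : min (E ω) (Lam t ω) ≤ E ω := min_le_left _ _
      have h2 : 0 ≤ min (E ω) (Lam t ω) := le_min hp.le (hLam0 t ω)
      split_ifs <;> constructor <;> linarith
    refine toG _ hMi hMm ?_ ?_
    · filter_upwards [hgood] with ω h t _
      exact rc_path (fun t => Lam t ω) h.2.1 (τ ω) t
    · intro s t hs hst
      have ht := hs.trans hst
      symm
      refine ae_eq_condExp_of_forall_setIntegral_eq (hHm0 s hs) (hMi t ht)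
        (fun _ _ _ => (hMi s hs).integrableOn) ?_ (hMm s hs).stronglyMeasurable.aestronglyMeasurable
      intro B hB _
      have hBm := hHm0 s hs _ hB
      obtain ⟨C, hC, hBC⟩ := trace_aux (F s) (A s) {ω | s < τ ω} (by
        intro B hB
        rw [hA s] at hB
        refine trace_gen (F s) {ω | s < τ ω} _ ?_ B hB
        rintro _ ⟨r, hr, hrs, rfl⟩ ω hω hω'
        exact absurd (lt_of_lt_of_le hω (le_trans hω' hrs)) (lt_irrefl _)) B hB
      have hdiff : ∀ᵐ ω ∂μ, ((if τ ω ≤ t then (1:ℝ) else 0)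
            - ∫ s in Set.Ioc 0 (min (τ ω) t), lam s ω) -
          ((if τ ω ≤ s then (1:ℝ) else 0) - ∫ s in Set.Ioc 0 (min (τ ω) s), lam s ω)
          = phi (Lam s ω) (Lam t ω) (E ω) := by
        filter_upwards [hMval, hgood] with ω h hg
        rw [h t, h s]
        have hmo : Lam s ω ≤ Lam t ω := hg.1 hst
        unfold phi
        by_cases h1 : Lam s ω < E ω
        · rw [if_pos h1, if_neg (not_le.2 h1), min_eq_right h1.le]; ring
        · have h2 := not_lt.1 h1
          rw [if_neg h1, if_pos h2, if_pos (h2.trans hmo), min_eq_left h2,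
            min_eq_left (h2.trans hmo)]; ring
      have hzero : ∫ ω in B, phi (Lam s ω) (Lam t ω) (E ω) ∂μ = 0 := by
        rw [← phi_indep (Finfty F) μ E hE hFinfm0 hEindep (Lam s) (Lam t)
          ((hLamF s hs).mono (hFinf s hs) le_rfl) ((hLamF t ht).mono (hFinf t ht) le_rfl)
          (hLam0 s) (hgood.mono fun ω h => h.1 hst) C (hFinf s hs _ hC),
          ← integral_indicator hBm, ← integral_indicator (hFle s _ hC)]
        refine integral_congr_ae ?_
        filter_upwards [hgood] with ω hg
        by_cases h1 : s < τ ω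
        · have := hBC ω h1
          by_cases h2 : ω ∈ C
          · simp [h2, this.2 h2]
          · have h3 : ω ∉ B := fun h => h2 (this.1 h)
            simp [h2, h3]
        · have h0 : phi (Lam s ω) (Lam t ω) (E ω) = 0 := by
            unfold phi
            rw [if_neg]
            exact not_lt.2 ((hg.2.2.2.2 s).1 (not_lt.1 h1))
          simp [indicator, h0]
      rw [← integral_congr_ae (ae_restrict_of_ae hdiff),
        integral_sub (hMi t ht).integrableOn (hMi s hs).integrableOn] at hzero
      linarith
  · intro M hMrc ⟨hMi, hMm, hMc⟩
    refine toG M hMi (fun t ht => (hMm t ht).mono le_sup_left le_rfl) (ae_of_all _ hMrc) ?_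
    intro s t hs hst
    have ht := hs.trans hst
    have h1 := indep_aux μ (F s) e (Finfty F) (hFinf s hs) hFinfm0 he hEindep (M t) (M s)
      (hMi t ht) ((hMm t ht).mono (hFinf t ht) le_rfl) (hMm s hs) (hMc s t hs hst)
    have hMs : Measurable[F s ⊔ A s] (M s) := (hMm s hs).mono le_sup_left le_rfl
    have h2 : μ[M s|F s ⊔ A s] = M s :=
      condExp_of_stronglyMeasurable (hHm0 s hs) hMs.stronglyMeasurable (hMi s hs)
    have h3 : μ[μ[M t|F s ⊔ e]|F s ⊔ A s] =ᵐ[μ] μ[M t|F s ⊔ A s] :=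
      condExp_condExp_of_le (hHK s hs) (sup_le (hFle s) he)
    have h4 : μ[μ[M t|F s ⊔ e]|F s ⊔ A s] =ᵐ[μ] μ[M s|F s ⊔ A s] := condExp_congr_ae h1
    rw [h2] at h4
    exact h3.symm.trans h4

end InvMarkovJump
end
end

section
/- Let (Ω, 𝓕, 𝔽 = (𝓕_t)_{t≥0}, P) be a filtered probability space satisfying the usual conditions. Let λ be a nonnegative 𝔽-progressively measurable process with Λ_t := ∫_0^t λ_s ds finite for all t ≥ 0 and Λ_∞ = ∞, P-a.s.; let E ~ Exp(1) be independent of 𝓕_∞, and τ := inf{t > 0 : Λ_t ≥ E}. Suppose in addition that J is an integrable real random variable with P(J ≠ 0) = 1 which is independent of 𝓕_∞ ∨ σ(E). Let 𝔄̃ = (𝓐̃_t)_{t≥0} with 𝓐̃_t := σ(J·1_{{τ ≤ s}} : s ≤ t), and let 𝔾̃ be the right-continuous regularization of (𝓕_t ∨ 𝓐̃_t)_{t≥0}. Then: (a) the process (J·1_{{τ ≤ t}} − E[J]·Λ_{τ∧t})_{t≥0} is a 𝔾̃-martingale, and (b) 𝔽 is immersed in 𝔾̃. -/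
open MeasureTheory ProbabilityTheory Filter Set
open scoped ENNReal Topology

noncomputable section

namespace InvMarkovJump

variable {Ω : Type*}

lemma measurable_of_ae {m0 m : MeasurableSpace Ω} {μ : Measure[m0] Ω}
    (hnull : ∀ s : Set Ω, μ s = 0 → MeasurableSet[m] s) {X Y : Ω → ℝ}
    (hY : Measurable[m] Y) (h : ∀ᵐ ω ∂μ, X ω = Y ω) : Measurable[m] X := by
  intro S hS
  have h0 : μ {ω | X ω ≠ Y ω} = 0 := h
  have e : X ⁻¹' S = (Y ⁻¹' S \ (Y ⁻¹' S \ X ⁻¹' S)) ∪ (X ⁻¹' S \ Y ⁻¹' S) := by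
    ext ω; simp only [mem_union, Set.mem_sdiff]; tauto
  have h1 : MeasurableSet[m] (Y ⁻¹' S \ X ⁻¹' S) := by
    refine hnull _ (measure_mono_null ?_ h0)
    rintro ω ⟨a, b⟩ hh
    simp only [mem_preimage] at a b
    rw [hh] at b; exact b a
  have h2 : MeasurableSet[m] (X ⁻¹' S \ Y ⁻¹' S) := by
    refine hnull _ (measure_mono_null ?_ h0)
    rintro ω ⟨a, b⟩ hh
    simp only [mem_preimage] at a b
    rw [hh] at a; exact b a
  rw [e]
  exact ((hY hS).diff h1).union h2

lemma det_path {f : ℝ → ℝ} (hf0 : ∀ s, 0 ≤ f s)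
    (hf : ∀ t : ℝ, IntegrableOn f (Set.Ioc 0 t) volume) :
    MonotoneOn (fun t => ∫ s in Set.Ioc 0 t, f s) (Ici 0) ∧
    ContinuousOn (fun t => ∫ s in Set.Ioc 0 t, f s) (Ici 0) := by
  constructor
  · intro a ha b hb hab
    exact setIntegral_mono_set (hf b) (ae_of_all _ fun x => hf0 x)
      (Set.Ioc_subset_Ioc_right hab).eventuallyLE
  · intro a ha
    have h1 : IntegrableOn f (Icc 0 (a+1)) volume := by
      rw [integrableOn_Icc_iff_integrableOn_Ioc]; exact hf _
    have h2 := intervalIntegral.continuousOn_primitive h1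
    have ha' : (0:ℝ) ≤ a := ha
    have h3 := h2 a ⟨ha', by linarith⟩
    refine h3.mono_of_mem_nhdsWithin ?_
    rw [← Set.Ici_inter_Iic]
    exact inter_mem_nhdsWithin _ (Iic_mem_nhds (by linarith))

lemma det_hit {L : ℝ → ℝ} (hm : MonotoneOn L (Ici 0)) (hc : ContinuousOn L (Ici 0))
    (h0 : L 0 = 0) (hinf : Tendsto L atTop atTop) {e : ℝ} (he : 0 < e) {T : ℝ}
    (hT : T = sInf {t : ℝ | 0 < t ∧ e ≤ L t}) :
    (∀ t, 0 ≤ t → (T ≤ t ↔ e ≤ L t)) ∧ ∀ t, 0 ≤ t → L (min T t) = min e (L t) := by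
  have hS : {t : ℝ | 0 < t ∧ e ≤ L t} = Ici 0 ∩ L ⁻¹' (Ici e) := by
    ext t
    simp only [mem_ofPred_eq, mem_inter_iff, mem_Ici, mem_preimage]
    constructor
    · rintro ⟨a, b⟩; exact ⟨a.le, b⟩
    · rintro ⟨a, b⟩
      refine ⟨lt_of_le_of_ne a ?_, b⟩
      rintro rfl
      linarith
  rw [hS] at hT
  have hcl : IsClosed (Ici 0 ∩ L ⁻¹' (Ici e)) := hc.preimage_isClosed_of_isClosed isClosed_Ici isClosed_Ici
  have hbd : BddBelow (Ici 0 ∩ L ⁻¹' (Ici e)) := ⟨0, fun x hx => hx.1⟩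
  have hne : (Ici 0 ∩ L ⁻¹' (Ici e)).Nonempty := by
    obtain ⟨t, h1, h2⟩ := ((hinf.eventually_ge_atTop e).and (eventually_ge_atTop 0)).exists
    exact ⟨t, h2, h1⟩
  have hmem := hcl.csInf_mem hne hbd
  rw [← hT] at hmem
  have hT0 : 0 ≤ T := hmem.1
  have hTe : e ≤ L T := hmem.2
  have h1 : ∀ t, 0 ≤ t → (T ≤ t ↔ e ≤ L t) := by
    intro t ht
    constructor
    · intro h; exact hTe.trans (hm hT0 ht h)
    · intro h; rw [hT]; exact csInf_le hbd ⟨ht, h⟩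
  have hLT : L T = e := by
    have : e ∈ L '' Icc 0 T := intermediate_value_Icc hT0 (hc.mono Icc_subset_Ici_self)
      ⟨by rw [h0]; exact he.le, hTe⟩
    obtain ⟨s, hs, hse⟩ := this
    have : T ≤ s := (h1 s hs.1).2 hse.ge
    have : s = T := le_antisymm hs.2 this
    rw [← this]; exact hse
  refine ⟨h1, fun t ht => ?_⟩
  rcases le_or_gt T t with h | h
  · rw [min_eq_left h, hLT, min_eq_left ((h1 t ht).1 h)]
  · rw [min_eq_right h.le, min_eq_right]
    by_contra hh
    exact absurd ((h1 t ht).2 (not_le.1 hh).le) (not_le.2 h)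

lemma martingale_rcReg {m0 : MeasurableSpace Ω} {μ : Measure Ω} [IsProbabilityMeasure μ]
    {H : ℝ → MeasurableSpace Ω} (hmono : ∀ s t : ℝ, 0 ≤ s → s ≤ t → H s ≤ H t)
    (hle : ∀ t, 0 ≤ t → H t ≤ m0) {M : ℝ → Ω → ℝ} (hM : IsMartingale μ H M)
    (hrc : ∀ s, 0 ≤ s → ∀ᵐ ω ∂μ, Tendsto (fun t => M t ω) (𝓝[>] s) (𝓝 (M s ω))) :
    IsMartingale μ (rcReg H) M := by
  obtain ⟨hInt, had, hce⟩ := hM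
  have hG1 : ∀ s, 0 ≤ s → H s ≤ rcReg H s := fun s hs =>
    le_iInf₂ fun u hu => hmono s u hs (le_of_lt hu)
  have hG2 : ∀ s u, s < u → rcReg H s ≤ H u := fun s u hu => iInf₂_le u hu
  have hG0 : ∀ s, 0 ≤ s → rcReg H s ≤ m0 := fun s hs =>
    (hG2 s (s+1) (by linarith)).trans (hle _ (by linarith))
  have had' : ∀ t : ℝ, 0 ≤ t → Measurable[rcReg H t] (M t) := fun t ht =>
    (had t ht).mono (hG1 t ht) le_rfl
  refine ⟨hInt, had', ?_⟩
  intro s t hs hst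
  have hself : μ[M s|rcReg H s] = M s :=
    condExp_of_stronglyMeasurable (hG0 s hs) (had' s hs).stronglyMeasurable (hInt s hs)
  rcases eq_or_lt_of_le hst with rfl | hlt
  · rw [hself]
  have hr : 0 < t - s := sub_pos.2 hlt
  set u : ℕ → ℝ := fun n => s + (t - s) / ((n:ℝ) + 1) with hu
  have hus : ∀ n, s < u n := fun n => by
    have : 0 < (t - s) / ((n:ℝ) + 1) := by positivity
    simp only [hu]; linarith
  have hut : ∀ n, u n ≤ t := fun n => by
    have : (t - s) / ((n:ℝ) + 1) ≤ t - s := by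
      apply div_le_self hr.le
      have : (0:ℝ) ≤ n := Nat.cast_nonneg n
      linarith
    simp only [hu]; linarith
  have hu0 : ∀ n, 0 ≤ u n := fun n => hs.trans (hus n).le
  have hulim : Tendsto u atTop (𝓝[>] s) := by
    refine tendsto_nhdsWithin_iff.2 ⟨?_, Eventually.of_forall hus⟩
    have h1 : Tendsto (fun n : ℕ => (t - s) * (1 / ((n:ℝ) + 1))) atTop (𝓝 ((t-s) * 0)) :=
      tendsto_one_div_add_atTop_nhds_zero_nat.const_mul _
    have h2 := h1.const_add s
    simp only [mul_zero, add_zero] at h2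
    refine h2.congr fun n => ?_
    simp only [hu]; ring
  have hUI : UniformIntegrable (fun n => M (u n)) 1 μ := by
    have := (hInt t (hs.trans hst)).uniformIntegrable_condExp (ℱ := fun n => H (u n))
      (fun n => hle _ (hu0 n))
    exact this.ae_eq fun n => hce (u n) t (hu0 n) (hut n)
  have hL1 : Tendsto (fun n => eLpNorm (M (u n) - M s) 1 μ) atTop (𝓝 0) := by
    refine tendsto_Lp_finite_of_tendsto_ae le_rfl ENNReal.one_ne_top
      (fun n => (hInt _ (hu0 n)).aestronglyMeasurable) (memLp_one_iff_integrable.2 (hInt s hs))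
      hUI.2.1 ?_
    filter_upwards [hrc s hs] with ω hω
    exact hω.comp hulim
  have hb : ∀ n, eLpNorm (μ[M t|rcReg H s] - M s) 1 μ ≤ eLpNorm (M (u n) - M s) 1 μ := by
    intro n
    have e1 : μ[M (u n)|rcReg H s] =ᵐ[μ] μ[M t|rcReg H s] :=
      (condExp_congr_ae (hce (u n) t (hu0 n) (hut n)).symm).trans
        (condExp_condExp_of_le (hG2 s _ (hus n)) (hle _ (hu0 n)))
    have e2 : μ[M (u n) - M s|rcReg H s] =ᵐ[μ] μ[M t|rcReg H s] - M s := by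
      refine (condExp_sub (hInt _ (hu0 n)) (hInt s hs) _).trans ?_
      rw [hself]
      exact e1.sub (EventuallyEq.refl _ _)
    rw [← eLpNorm_congr_ae e2]
    exact eLpNorm_condExp_le_eLpNorm _ le_rfl
  have hz : eLpNorm (μ[M t|rcReg H s] - M s) 1 μ = 0 :=
    le_antisymm (ge_of_tendsto' hL1 hb) zero_le
  rw [eLpNorm_eq_zero_iff (integrable_condExp.sub (hInt s hs)).aestronglyMeasurable one_ne_zero] at hz
  filter_upwards [hz] with ω hω
  simpa [sub_eq_zero] using hω

lemma condExp_sup_indep {A A' B m0 : MeasurableSpace Ω} {μ : Measure[m0] Ω}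
    [IsProbabilityMeasure μ] (hAA : A ≤ A') (hA' : A' ≤ m0) (hB : B ≤ m0)
    (hind : Indep B A' μ) {f g : Ω → ℝ} (hf : Integrable f μ) (hfm : Measurable[A'] f)
    (hg : Integrable g μ) (hgm : Measurable[A] g)
    (hfg : μ[f|A] =ᵐ[μ] g) : μ[f|A ⊔ B] =ᵐ[μ] g := by
  have hAm := hAA.trans hA'
  have hsup : A ⊔ B ≤ m0 := sup_le hAm hB
  have hgen : A ⊔ B = MeasurableSpace.generateFrom
      (image2 (· ∩ ·) {S | MeasurableSet[A] S} {S | MeasurableSet[B] S}) := by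
    apply le_antisymm
    · refine sup_le ?_ ?_
      · intro S hS
        exact MeasurableSpace.measurableSet_generateFrom
          ⟨S, hS, univ, MeasurableSet.univ, by simp⟩
      · intro S hS
        exact MeasurableSpace.measurableSet_generateFrom
          ⟨univ, MeasurableSet.univ, S, hS, by simp⟩
    · refine MeasurableSpace.generateFrom_le ?_
      rintro _ ⟨S, hS, T, hT, rfl⟩
      exact MeasurableSet.inter ((le_sup_left : A ≤ A ⊔ B) _ hS) ((le_sup_right : B ≤ A ⊔ B) _ hT)
  have hpi : IsPiSystem
      (image2 (· ∩ ·) {S | MeasurableSet[A] S} {S | MeasurableSet[B] S}) := by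
    rintro _ ⟨S, hS, T, hT, rfl⟩ _ ⟨S', hS', T', hT', rfl⟩ -
    exact ⟨S ∩ S', MeasurableSet.inter hS hS', T ∩ T', MeasurableSet.inter hT hT',
      Set.inter_inter_inter_comm _ _ _ _⟩
  set D : Ω → ℝ := f - g with hD
  have hDint : Integrable D μ := hf.sub hg
  have hDm : Measurable[A'] D := hfm.sub (hgm.mono hAA le_rfl)
  have hDA : ∀ S, MeasurableSet[A] S → ∫ x in S, D x ∂μ = 0 := by
    intro S hS
    have : ∫ x in S, D x ∂μ = ∫ x in S, f x ∂μ - ∫ x in S, g x ∂μ :=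
      integral_sub hf.integrableOn hg.integrableOn
    rw [this, ← setIntegral_condExp hAm hf hS, sub_eq_zero]
    exact setIntegral_congr_ae (hAm _ hS) (hfg.mono fun x hx _ => hx)
  have key : ∀ S, MeasurableSet[A ⊔ B] S → ∫ x in S, D x ∂μ = 0 := by
    intro S hS
    induction S, hS using MeasurableSpace.induction_on_inter hgen hpi with
    | empty => simp
    | basic S hS =>
      obtain ⟨S, hS, T, hT, rfl⟩ := hS
      have hS0 := hAm _ hS
      have hT0 := hB _ hT
      have h1 : ∫ x in S ∩ T, D x ∂μ
          = ∫ x, ((T.indicator (fun _ => (1:ℝ))) * (S.indicator D)) x ∂μ := by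
        rw [← integral_indicator (hS0.inter hT0)]
        congr 1; ext x
        by_cases a : x ∈ S <;> by_cases b : x ∈ T <;> simp [a, b]
      have hI : IndepFun (T.indicator (fun _ => (1:ℝ))) (S.indicator D) μ := by
        rw [IndepFun_iff_Indep]
        refine indep_of_indep_of_le_left (indep_of_indep_of_le_right hind ?_) ?_
        · exact Measurable.comap_le (hDm.indicator (hAA _ hS))
        · exact Measurable.comap_le (Measurable.indicator (measurable_const) hT)
      show ∫ x in S ∩ T, D x ∂μ = 0
      rw [h1, hI.integral_mul_eq_mul_integral, integral_indicator hS0, hDA S hS, mul_zero]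
      · exact (measurable_const.indicator hT0).aestronglyMeasurable
      · exact (hDint.indicator hS0).aestronglyMeasurable
    | compl S hS ih =>
      have := integral_add_compl (hsup _ hS) hDint
      have hu := hDA univ MeasurableSet.univ
      rw [setIntegral_univ] at hu
      rw [ih, hu] at this; linarith
    | iUnion S hd hS ih =>
      rw [integral_iUnion (fun i => hsup _ (hS i)) hd hDint.integrableOn]
      simp [ih]
  refine (ae_eq_condExp_of_forall_setIntegral_eq hsup hf (fun _ _ _ => hg.integrableOn) ?_ ?_).symm
  · intro S hS _
    have := key S hS
    have h2 : ∫ x in S, D x ∂μ = ∫ x in S, f x ∂μ - ∫ x in S, g x ∂μ :=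
      integral_sub hf.integrableOn hg.integrableOn
    linarith
  · have h3 : Measurable[A ⊔ B] g := hgm.mono le_sup_left le_rfl
    exact h3.stronglyMeasurable.aestronglyMeasurable

lemma exp_pos_ae {m0 : MeasurableSpace Ω} {μ : Measure Ω} [IsProbabilityMeasure μ]
    {E : Ω → ℝ} (hE : IsExpOne μ E) : ∀ᵐ ω ∂μ, 0 < E ω := by
  have h := hE.2 0 le_rfl
  have hm : MeasurableSet {ω | 0 < E ω} := measurableSet_lt measurable_const hE.1
  rw [neg_zero, Real.exp_zero, ENNReal.ofReal_one] at h
  exact (prob_compl_eq_zero_iff hm).2 h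

lemma exp_integrable {m0 : MeasurableSpace Ω} {μ : Measure Ω} [IsProbabilityMeasure μ]
    {E : Ω → ℝ} (hE : IsExpOne μ E) : Integrable E μ := by
  have hpos := exp_pos_ae hE
  refine ⟨hE.1.aestronglyMeasurable, ?_⟩
  rw [hasFiniteIntegral_iff_ofReal (hpos.mono fun _ h => h.le),
    lintegral_eq_lintegral_meas_lt μ (hpos.mono fun _ h => h.le) hE.1.aemeasurable]
  have : ∫⁻ t in Ioi (0:ℝ), μ {a | t < E a} = ∫⁻ t in Ioi (0:ℝ), ENNReal.ofReal (Real.exp (-t)) :=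
    setLIntegral_congr_fun measurableSet_Ioi fun t ht => hE.2 t (le_of_lt ht)
  rw [this]
  exact (integrableOn_exp_neg_Ioi 0).lintegral_lt_top

lemma exp_h {m0 : MeasurableSpace Ω} {μ : Measure Ω} [IsProbabilityMeasure μ]
    {E : Ω → ℝ} (hE : IsExpOne μ E) {a : ℝ} (ha : 0 ≤ a) :
    ∫ ω, ((if E ω ≤ a then (1:ℝ) else 0) - min (E ω) a) ∂μ = 0 := by
  have hpos := exp_pos_ae hE
  have hEi := exp_integrable hE
  have hms : MeasurableSet {ω | E ω ≤ a} := measurableSet_le hE.1 measurable_const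
  have e1 : (fun ω => if E ω ≤ a then (1:ℝ) else 0) = {ω | E ω ≤ a}.indicator (fun _ => (1:ℝ)) := by
    ext ω; simp [indicator]
  have hI1 : ∫ ω, (if E ω ≤ a then (1:ℝ) else 0) ∂μ = 1 - Real.exp (-a) := by
    rw [e1, integral_indicator_const _ hms, smul_eq_mul, mul_one]
    have hc : {ω | E ω ≤ a} = {ω | a < E ω}ᶜ := by ext; simp
    rw [hc, probReal_compl_eq_one_sub (measurableSet_lt measurable_const hE.1), measureReal_def,
      hE.2 a ha, ENNReal.toReal_ofReal (Real.exp_nonneg _)]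
  have hI2 : ∫ ω, min (E ω) a ∂μ = 1 - Real.exp (-a) := by
    have hmin0 : 0 ≤ᵐ[μ] fun ω => min (E ω) a := hpos.mono fun ω h => le_min h.le ha
    have hmm : Measurable fun ω => min (E ω) a := hE.1.min measurable_const
    rw [integral_eq_lintegral_of_nonneg_ae hmin0 hmm.aestronglyMeasurable,
      lintegral_eq_lintegral_meas_lt μ hmin0 hmm.aemeasurable]
    have h1 : ∫⁻ t in Ioi (0:ℝ), μ {ω | t < min (E ω) a}
        = ∫⁻ t in Ioi (0:ℝ), (Iio a).indicator (fun t => ENNReal.ofReal (Real.exp (-t))) t := by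
      refine setLIntegral_congr_fun measurableSet_Ioi fun t ht => ?_
      by_cases h : t < a
      · have : {ω | t < min (E ω) a} = {ω | t < E ω} := by ext; simp [h]
        simp only [this, hE.2 t (le_of_lt ht), indicator, mem_Iio, h, if_true]
      · have : {ω | t < min (E ω) a} = ∅ := by ext; simp [h]
        simp only [this, measure_empty, indicator, mem_Iio, h, if_false]
    rw [h1, lintegral_indicator measurableSet_Iio, Measure.restrict_restrict measurableSet_Iio,
      Iio_inter_Ioi, Measure.restrict_congr_set Ioo_ae_eq_Ioc,
      ← integral_eq_lintegral_of_nonneg_ae (ae_of_all _ fun _ => Real.exp_nonneg _)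
        (by fun_prop), ← intervalIntegral.integral_of_le ha]
    have := intervalIntegral.integral_comp_neg (a := 0) (b := a) Real.exp
    rw [this]; simp
  rw [integral_sub, hI1, hI2, sub_self]
  · rw [e1]; exact (integrable_const _).indicator hms
  · exact (hEi.inf (integrable_const a))

lemma zero_lemma {Fi m0 : MeasurableSpace Ω} {μ : Measure[m0] Ω} [IsProbabilityMeasure μ]
    (hFi : Fi ≤ m0) {E : Ω → ℝ} (hE : IsExpOne μ E)
    (hEindep : Indep (MeasurableSpace.comap E inferInstance) Fi μ)
    {J : Ω → ℝ} (hJmeas : Measurable J) (hJint : Integrable J μ)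
    (hJindep : Indep (MeasurableSpace.comap J inferInstance)
      (Fi ⊔ MeasurableSpace.comap E inferInstance) μ)
    {Z : Ω → ℝ} (hZ : Measurable[Fi] Z) (hZ0 : ∀ ω, 0 ≤ Z ω) {B : Set Ω}
    (hB : MeasurableSet[Fi] B) :
    Integrable (fun ω => (if E ω ≤ Z ω then J ω else 0) - (∫ x, J x ∂μ) * min (E ω) (Z ω)) μ ∧
    ∫ ω in B, ((if E ω ≤ Z ω then J ω else 0) - (∫ x, J x ∂μ) * min (E ω) (Z ω)) ∂μ = 0 := by
  set c := ∫ x, J x ∂μ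
  have hpos := exp_pos_ae hE
  have hEi := exp_integrable hE
  have hZm : Measurable Z := hZ.mono hFi le_rfl
  have hBm := hFi _ hB
  have hEK : Measurable[Fi ⊔ MeasurableSpace.comap E inferInstance] E :=
    (comap_measurable E).mono le_sup_right le_rfl
  have hZK : Measurable[Fi ⊔ MeasurableSpace.comap E inferInstance] Z := hZ.mono le_sup_left le_rfl
  have hms : MeasurableSet {ω | E ω ≤ Z ω} := measurableSet_le hE.1 hZm
  have hmsK : MeasurableSet[Fi ⊔ MeasurableSpace.comap E inferInstance] {ω | E ω ≤ Z ω} :=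
    measurableSet_le hEK hZK
  have hi1 : Integrable (fun ω => if E ω ≤ Z ω then J ω else 0) μ := by
    have : (fun ω => if E ω ≤ Z ω then J ω else 0) = {ω | E ω ≤ Z ω}.indicator J := by
      ext ω; simp [indicator]
    rw [this]; exact hJint.indicator hms
  have hi2 : Integrable (fun ω => min (E ω) (Z ω)) μ := by
    refine hEi.mono (hE.1.min hZm).aestronglyMeasurable ?_
    filter_upwards [hpos] with ω h
    rw [Real.norm_of_nonneg (le_min h.le (hZ0 ω)), Real.norm_of_nonneg h.le]
    exact min_le_left _ _
  have hi3 : Integrable (fun ω => if E ω ≤ Z ω then (1:ℝ) else 0) μ := by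
    have : (fun ω => if E ω ≤ Z ω then (1:ℝ) else 0) = {ω | E ω ≤ Z ω}.indicator (fun _ => 1) := by
      ext ω; simp [indicator]
    rw [this]; exact (integrable_const _).indicator hms
  refine ⟨hi1.sub (hi2.const_mul c), ?_⟩
  have step1 : ∫ ω in B, (if E ω ≤ Z ω then J ω else 0) ∂μ
      = c * ∫ ω in B, (if E ω ≤ Z ω then (1:ℝ) else 0) ∂μ := by
    have hI : IndepFun J (B.indicator ({ω | E ω ≤ Z ω}.indicator (fun _ => (1:ℝ)))) μ := by
      rw [IndepFun_iff_Indep]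
      refine indep_of_indep_of_le_right hJindep (Measurable.comap_le ?_)
      exact (Measurable.indicator measurable_const hmsK).indicator
        ((le_sup_left : Fi ≤ Fi ⊔ MeasurableSpace.comap E inferInstance) _ hB)
    have h := hI.integral_mul_eq_mul_integral hJmeas.aestronglyMeasurable
      ((measurable_const.indicator hms).indicator hBm).aestronglyMeasurable
    rw [integral_indicator hBm] at h
    rw [← integral_indicator hBm]
    have e2 : (fun ω => if E ω ≤ Z ω then (1:ℝ) else 0) = {ω | E ω ≤ Z ω}.indicator (fun _ => 1) := by
      ext ω; simp [indicator]
    rw [e2, ← h]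
    congr 1; ext ω
    by_cases a : ω ∈ B <;> by_cases b : E ω ≤ Z ω <;> simp [a, b]
  have step2 : ∫ ω in B, ((if E ω ≤ Z ω then (1:ℝ) else 0) - min (E ω) (Z ω)) ∂μ = 0 := by
    set W : Ω → ℝ × ℝ := fun ω => (Z ω, B.indicator (fun _ => 1) ω) with hW
    have hWF : Measurable[Fi] W := hZ.prodMk (Measurable.indicator measurable_const hB)
    have hWm : Measurable W := hWF.mono hFi le_rfl
    have hI : IndepFun E W μ := by
      rw [IndepFun_iff_Indep]
      exact indep_of_indep_of_le_right hEindep hWF.comap_le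
    rw [indepFun_iff_map_prod_eq_prod_map_map hE.1.aemeasurable hWm.aemeasurable] at hI
    set φ : ℝ × (ℝ × ℝ) → ℝ := fun p => p.2.2 * ((if p.1 ≤ p.2.1 then (1:ℝ) else 0) - min p.1 p.2.1)
      with hφ
    have hφm : Measurable φ := by
      refine (measurable_snd.comp measurable_snd).mul (Measurable.sub ?_ ?_)
      · exact Measurable.ite (measurableSet_le measurable_fst (measurable_fst.comp measurable_snd))
          measurable_const measurable_const
      · exact measurable_fst.min (measurable_fst.comp measurable_snd)
    have e : ∀ ω, φ (E ω, W ω) = B.indicator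
        (fun ω => (if E ω ≤ Z ω then (1:ℝ) else 0) - min (E ω) (Z ω)) ω := by
      intro ω
      by_cases a : ω ∈ B <;> simp [hφ, hW, a]
    rw [← integral_indicator hBm]
    simp_rw [← e]
    have hpm : Measurable fun ω => (E ω, W ω) := hE.1.prodMk hWm
    have hφi : Integrable φ ((μ.map E).prod (μ.map W)) := by
      rw [← hI, integrable_map_measure hφm.aestronglyMeasurable hpm.aemeasurable]
      have : φ ∘ (fun ω => (E ω, W ω)) = B.indicator
        (fun ω => (if E ω ≤ Z ω then (1:ℝ) else 0) - min (E ω) (Z ω)) := funext e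
      rw [this]
      exact (hi3.sub hi2).indicator hBm
    rw [← integral_map hpm.aemeasurable hφm.aestronglyMeasurable, hI]
    have := Measure.isProbabilityMeasure_map (μ := μ) hE.1.aemeasurable
    have := Measure.isProbabilityMeasure_map (μ := μ) hWm.aemeasurable
    rw [integral_prod_symm _ hφi]
    have hz : ∀ᵐ w ∂(μ.map W), ∫ x, φ (x, w) ∂(μ.map E) = 0 := by
      have hw : ∀ᵐ w ∂(μ.map W), 0 ≤ w.1 := by
        rw [ae_map_iff hWm.aemeasurable (measurableSet_le measurable_const measurable_fst)]
        exact ae_of_all _ hZ0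
      filter_upwards [hw] with w hw
      have hφw : Measurable fun x : ℝ => φ (x, w) :=
        hφm.comp (measurable_id.prodMk measurable_const)
      rw [integral_map hE.1.aemeasurable hφw.aestronglyMeasurable]
      simp only [hφ]
      rw [integral_const_mul, exp_h hE hw, mul_zero]
    rw [integral_congr_ae hz]; simp
  rw [integral_sub hi1.integrableOn (hi2.const_mul c).integrableOn, step1, integral_const_mul,
    ← mul_sub, ← integral_sub hi3.integrableOn hi2.integrableOn, step2, mul_zero]

lemma stopped_meas {F : ℝ → MeasurableSpace Ω} {lam : ℝ → Ω → ℝ} (hprog : ProgMeas F lam)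
    {t : ℝ} (ht : 0 ≤ t) {m : MeasurableSpace Ω} (hm : F t ≤ m) {T : Ω → ℝ}
    (hT : Measurable[m] (fun ω => min (T ω) t)) :
    Measurable[m] (fun ω => ∫ s in Set.Ioc 0 (min (T ω) t), lam s ω) := by
  have h1 : Measurable (fun p : Set.Icc (0:ℝ) t × Ω => lam p.1 p.2) := by
    refine (hprog t ht).mono ?_ le_rfl
    exact sup_le_sup le_rfl (MeasurableSpace.comap_mono hm)
  have h2 : Measurable (fun p : ℝ × Ω => lam (Set.projIcc 0 t ht p.1) p.2) :=
    h1.comp (((continuous_projIcc (h := ht)).measurable.comp measurable_fst).prodMk measurable_snd)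
  have hs : MeasurableSet {p : ℝ × Ω | 0 < p.1 ∧ p.1 ≤ min (T p.2) t} :=
    (measurableSet_lt measurable_const measurable_fst).inter
      (measurableSet_le measurable_fst (hT.comp measurable_snd))
  have h3 := (h2.indicator hs).stronglyMeasurable.integral_prod_left' (μ := (volume : Measure ℝ))
  convert h3.measurable using 1
  ext ω
  rw [← integral_indicator measurableSet_Ioc]
  congr 1; ext s
  by_cases h : s ∈ Ioc 0 (min (T ω) t)
  · have hI : s ∈ Icc 0 t := ⟨h.1.le, h.2.trans (min_le_right _ _)⟩
    rw [indicator_of_mem h, indicator_of_mem (show (s, ω) ∈ _ from h)]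
    simp [Set.projIcc_of_mem ht hI]
  · rw [indicator_of_notMem h, indicator_of_notMem (show (s, ω) ∉ _ from h)]

/-- The Cox construction with one jump time and random jump size `J`:
`(J·1_{τ ≤ t} − E[J]·Λ_{τ ∧ t})_t` is a `G̃`-martingale and `F` is immersed in `G̃`. -/
theorem cox_one_jump_random_size {m0 : MeasurableSpace Ω} (μ : Measure Ω)
    [IsProbabilityMeasure μ]
    (F : ℝ → MeasurableSpace Ω) (hUC : UsualConditions μ F)
    (lam : ℝ → Ω → ℝ) (hprog : ProgMeas F lam)
    (hnonneg : ∀ s ω, 0 ≤ lam s ω)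
    (hfin : ∀ᵐ ω ∂μ, ∀ t : ℝ, IntegrableOn (fun s => lam s ω) (Set.Ioc 0 t) volume)
    (hinf : ∀ᵐ ω ∂μ, Tendsto (fun t => ∫ s in Set.Ioc 0 t, lam s ω) atTop atTop)
    (E : Ω → ℝ) (hE : IsExpOne μ E)
    (hEindep : Indep (MeasurableSpace.comap E inferInstance) (Finfty F) μ)
    (τ : Ω → ℝ)
    (hτ : ∀ ω, τ ω = sInf {t : ℝ | 0 < t ∧ E ω ≤ ∫ s in Set.Ioc 0 t, lam s ω})
    (J : Ω → ℝ) (hJmeas : Measurable J) (hJint : Integrable J μ)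
    (hJnonvanish : μ {ω | J ω ≠ 0} = 1)
    (hJindep : Indep (MeasurableSpace.comap J inferInstance)
      (Finfty F ⊔ MeasurableSpace.comap E inferInstance) μ)
    (Atil : ℝ → MeasurableSpace Ω)
    (hAtil : Atil = natFilt (fun s ω => if τ ω ≤ s then J ω else 0))
    (Gtil : ℝ → MeasurableSpace Ω)
    (hGtil : ∀ t : ℝ, Gtil t = rcReg (fun u => F u ⊔ Atil u) t) :
    IsMartingale μ Gtil (fun t ω =>
      (if τ ω ≤ t then J ω else 0) -
        (∫ x, J x ∂μ) * ∫ s in Set.Ioc 0 (min (τ ω) t), lam s ω) ∧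
    Immersed μ F Gtil := by
  subst hAtil
  obtain ⟨⟨hFmono, hFle⟩, -, hnull0⟩ := hUC
  have hGeq : Gtil = rcReg (fun u => F u ⊔ natFilt (fun s ω => if τ ω ≤ s then J ω else 0) u) :=
    funext hGtil
  set Y : ℝ → Ω → ℝ := fun s ω => if τ ω ≤ s then J ω else 0 with hY
  set H : ℝ → MeasurableSpace Ω := fun u => F u ⊔ natFilt Y u with hH
  set L : ℝ → Ω → ℝ := fun t ω => ∫ s in Set.Ioc 0 t, lam s ω with hL
  set c := ∫ x, J x ∂μ with hc
  have hFi : Finfty F ≤ m0 := iSup₂_le fun t _ => hFle t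
  have hFFi : ∀ t, 0 ≤ t → F t ≤ Finfty F := fun t ht => le_iSup₂_of_le t ht le_rfl
  have hσE : MeasurableSpace.comap E inferInstance ≤ m0 := hE.1.comap_le
  have hσJ : MeasurableSpace.comap J inferInstance ≤ m0 := hJmeas.comap_le
  have hnull : ∀ u, 0 ≤ u → ∀ s : Set Ω, μ s = 0 → MeasurableSet[F u] s :=
    fun u hu s hs => hFmono 0 u le_rfl hu s (hnull0 s hs)
  have hLm : ∀ t, 0 ≤ t → Measurable[F t] (L t) := by
    intro t ht
    have := stopped_meas hprog ht (le_refl (F t)) (T := fun _ => t) (by exact measurable_const)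
    simpa using this
  have hL0 : ∀ t ω, 0 ≤ L t ω := fun t ω => integral_nonneg fun s => hnonneg s ω
  have hgood : ∀ᵐ ω ∂μ, (∀ t, 0 ≤ t → (τ ω ≤ t ↔ E ω ≤ L t ω)) ∧
      (∀ t, 0 ≤ t → L (min (τ ω) t) ω = min (E ω) (L t ω)) ∧
      ContinuousOn (fun t => L t ω) (Ici 0) := by
    filter_upwards [hfin, hinf, exp_pos_ae hE] with ω h1 h2 h3
    obtain ⟨ha, hb⟩ := det_path (fun s => hnonneg s ω) h1
    obtain ⟨hx, hy⟩ := det_hit ha hb (by simp) h2 h3 (hτ ω)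
    exact ⟨hx, hy, hb⟩
  have hτ0 : ∀ ω, 0 ≤ τ ω := fun ω => by
    rw [hτ ω]; exact Real.sInf_nonneg fun x hx => hx.1.le
  -- the big filtration
  have hHK : ∀ u, 0 ≤ u → H u ≤ (F u ⊔ MeasurableSpace.comap E inferInstance) ⊔
      MeasurableSpace.comap J inferInstance := by
    intro u hu
    have hFK : F u ≤ (F u ⊔ MeasurableSpace.comap E inferInstance) ⊔
      MeasurableSpace.comap J inferInstance := le_sup_left.trans le_sup_left
    refine sup_le hFK (iSup₂_le fun s hs => Measurable.comap_le ?_)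
    refine measurable_of_ae (μ := μ) (fun S hS => hFK _ (hnull u hu S hS))
      (Y := fun ω => if E ω ≤ L s ω then J ω else 0) ?_ ?_
    · have h1 : Measurable[(F u ⊔ MeasurableSpace.comap E inferInstance) ⊔
          MeasurableSpace.comap J inferInstance] E :=
        (comap_measurable E).mono (le_sup_right.trans le_sup_left) le_rfl
      have h2 : Measurable[(F u ⊔ MeasurableSpace.comap E inferInstance) ⊔
          MeasurableSpace.comap J inferInstance] (L s) :=
        (hLm s hs.1).mono ((hFmono s u hs.1 hs.2).trans hFK) le_rfl
      have h3 : Measurable[(F u ⊔ MeasurableSpace.comap E inferInstance) ⊔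
          MeasurableSpace.comap J inferInstance] J :=
        (comap_measurable J).mono le_sup_right le_rfl
      exact Measurable.ite (measurableSet_le h1 h2) h3 measurable_const
    · filter_upwards [hgood] with ω hω
      simp only [hY, hω.1 s hs.1]
  have hHle : ∀ u, 0 ≤ u → H u ≤ m0 := fun u hu =>
    (hHK u hu).trans (sup_le (sup_le (hFle u) hσE) hσJ)
  have hHmono : ∀ s t : ℝ, 0 ≤ s → s ≤ t → H s ≤ H t := by
    intro s t hs hst
    refine sup_le_sup (hFmono s t hs hst) (iSup₂_le fun r hr => ?_)
    exact le_iSup₂_of_le r ⟨hr.1, hr.2.trans hst⟩ le_rfl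
  have hYm : ∀ s u, 0 ≤ s → s ≤ u → Measurable[H u] (Y s) := by
    intro s u hs hsu
    refine (comap_measurable (Y s)).mono ?_ le_rfl
    exact le_trans (le_iSup₂_of_le (f := fun s (_ : s ∈ Icc (0:ℝ) u) =>
      MeasurableSpace.comap (Y s) inferInstance) s ⟨hs, hsu⟩ le_rfl) le_sup_right
  have hJ0 : μ {ω | J ω = 0} = 0 := by
    have hm : MeasurableSet {ω | J ω ≠ 0} := (hJmeas (measurableSet_singleton 0)).compl
    have := (prob_compl_eq_zero_iff hm).2 hJnonvanish
    convert this using 2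
    ext ω; simp
  have hτm : ∀ u, 0 ≤ u → Measurable[H u] (fun ω => min (τ ω) u) := by
    intro u hu
    refine @measurable_of_Iic ℝ Ω _ _ _ (H u) _ _ _ _ fun x => ?_
    rcases le_or_gt u x with hux | hux
    · have : (fun ω => min (τ ω) u) ⁻¹' Iic x = univ := by ext ω; simp [hux]
      rw [this]; exact @MeasurableSet.univ _ (H u)
    rcases lt_or_ge x 0 with hx | hx
    · have : (fun ω => min (τ ω) u) ⁻¹' Iic x = ∅ := by
        ext ω
        have := hτ0 ω
        simp only [mem_preimage, mem_Iic, mem_empty_iff_false, iff_false, not_le, lt_min_iff]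
        exact ⟨by linarith, hux⟩
      rw [this]; exact @MeasurableSet.empty _ (H u)
    have : (fun ω => min (τ ω) u) ⁻¹' Iic x = (Y x ⁻¹' {0}ᶜ) ∪ ({ω | τ ω ≤ x} ∩ {ω | J ω = 0}) := by
      ext ω
      have h1 : min (τ ω) u ≤ x ↔ τ ω ≤ x := by
        rw [min_le_iff]; constructor
        · rintro (h | h)
          · exact h
          · linarith
        · exact Or.inl
      by_cases h : τ ω ≤ x <;> by_cases h' : J ω = 0 <;>
        simp [hY, h1, h, h']
    rw [this]
    refine MeasurableSet.union (hYm x u hx hux.le (measurableSet_singleton 0).compl) ?_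
    exact (le_sup_left : F u ≤ H u) _ (hnull u hu _ (measure_mono_null inter_subset_right hJ0))
  -- the compensated jump process
  set M : ℝ → Ω → ℝ := fun t ω => Y t ω - c * L (min (τ ω) t) ω with hM
  have hMae : ∀ t, 0 ≤ t → M t =ᵐ[μ]
      fun ω => (if E ω ≤ L t ω then J ω else 0) - c * min (E ω) (L t ω) := by
    intro t ht
    filter_upwards [hgood] with ω hω
    simp only [hM, hY, hω.1 t ht, hω.2.1 t ht]
  have hMz : ∀ t, 0 ≤ t → ∀ B, MeasurableSet[Finfty F] B →
      Integrable (M t) μ ∧ ∫ ω in B, M t ω ∂μ = 0 := by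
    intro t ht B hB
    obtain ⟨h1, h2⟩ := zero_lemma hFi hE hEindep hJmeas hJint hJindep
      ((hLm t ht).mono (hFFi t ht) le_rfl) (hL0 t) hB
    refine ⟨h1.congr (hMae t ht).symm, ?_⟩
    rw [← h2]
    exact setIntegral_congr_ae (hFi _ hB) ((hMae t ht).mono fun x hx _ => hx)
  have hMint : ∀ t, 0 ≤ t → Integrable (M t) μ := fun t ht =>
    (hMz t ht univ MeasurableSet.univ).1
  have hMm : ∀ t, 0 ≤ t → Measurable[H t] (M t) := by
    intro t ht
    have h1 : Measurable[H t] (fun ω => L (min (τ ω) t) ω) :=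
      stopped_meas hprog ht (le_sup_left : F t ≤ H t) (hτm t ht)
    exact (hYm t t ht le_rfl).sub (h1.const_mul c)
  have hMH : IsMartingale μ H M := by
    refine ⟨hMint, hMm, fun s t hs hst => ?_⟩
    have ht := hs.trans hst
    refine (ae_eq_condExp_of_forall_setIntegral_eq (hHle s hs) (hMint t ht)
      (fun _ _ _ => (hMint s hs).integrableOn) ?_
      (hMm s hs).stronglyMeasurable.aestronglyMeasurable).symm
    intro A hA _
    have htr : H s ≤ MeasurableSpace.map (Subtype.val : {ω // s < τ ω} → Ω)
        (MeasurableSpace.comap (Subtype.val : {ω // s < τ ω} → Ω) (F s)) := by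
      refine sup_le (fun S hS => ⟨S, hS, rfl⟩) (iSup₂_le fun r hr => ?_)
      rintro _ ⟨S, hS, rfl⟩
      have hz : ∀ x : {ω // s < τ ω}, Y r x.1 = 0 := fun x => by
        have : ¬ τ x.1 ≤ r := not_le.2 (lt_of_le_of_lt hr.2 x.2)
        simp [hY, this]
      by_cases h0 : (0:ℝ) ∈ S
      · refine ⟨univ, @MeasurableSet.univ _ (F s), ?_⟩
        ext x; simp [hz x, h0]
      · refine ⟨∅, @MeasurableSet.empty _ (F s), ?_⟩
        ext x; simp [hz x, h0]
    obtain ⟨B, hB, hBA⟩ := htr A hA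
    have hAB : ∀ ω, s < τ ω → (ω ∈ A ↔ ω ∈ B) := fun ω hω =>
      (Set.ext_iff.1 hBA ⟨ω, hω⟩).symm
    have hD : ∀ ω, τ ω ≤ s → M t ω - M s ω = 0 := by
      intro ω hω
      have hω' := hω.trans hst
      simp [hM, hY, hω, hω']
    have hA0 := hHle s hs _ hA
    have hB0 := hFle s _ hB
    have e : ∫ ω in A, (M t ω - M s ω) ∂μ = ∫ ω in B, (M t ω - M s ω) ∂μ := by
      rw [← integral_indicator hA0, ← integral_indicator hB0]
      congr 1; ext ω
      rcases le_or_gt (τ ω) s with h | h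
      · simp only [indicator, hD ω h, ite_self]
      · by_cases ha : ω ∈ A
        · rw [indicator_of_mem ha, indicator_of_mem ((hAB ω h).1 ha)]
        · rw [indicator_of_notMem ha, indicator_of_notMem fun hb => ha ((hAB ω h).2 hb)]
    rw [integral_sub (hMint t ht).integrableOn (hMint s hs).integrableOn,
      integral_sub (hMint t ht).integrableOn (hMint s hs).integrableOn,
      (hMz t ht B (hFFi s hs _ hB)).2, (hMz s hs B (hFFi s hs _ hB)).2] at e
    linarith
  rw [hGeq]
  refine ⟨martingale_rcReg hHmono hHle hMH ?_, ?_, ?_⟩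
  · intro s hs
    filter_upwards [hgood] with ω hω
    have hYr : Tendsto (fun t => Y t ω) (𝓝[>] s) (𝓝 (Y s ω)) := by
      refine tendsto_const_nhds.congr' ?_
      rcases le_or_gt (τ ω) s with h | h
      · filter_upwards [self_mem_nhdsWithin] with t ht
        have : τ ω ≤ t := h.trans (le_of_lt ht)
        simp [hY, h, this]
      · filter_upwards [mem_nhdsWithin_of_mem_nhds (Iio_mem_nhds h)] with t ht
        have h1 : ¬ τ ω ≤ t := not_le.2 ht
        simp [hY, not_le.2 h, h1]
    have hLr : Tendsto (fun t => L (min (τ ω) t) ω) (𝓝[>] s) (𝓝 (L (min (τ ω) s) ω)) := by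
      have h1 : Tendsto (fun t => L t ω) (𝓝[>] s) (𝓝 (L s ω)) :=
        (hω.2.2 s hs).mono_left (nhdsWithin_mono _ fun x hx => hs.trans (le_of_lt hx))
      rw [hω.2.1 s hs]
      refine (Tendsto.min (tendsto_const_nhds (x := E ω)) h1).congr' ?_
      filter_upwards [self_mem_nhdsWithin] with t ht
      exact (hω.2.1 t (hs.trans (le_of_lt ht))).symm
    exact hYr.sub (hLr.const_mul c)
  · intro t ht
    exact le_iInf₂ fun u hu => (hFmono t u ht (le_of_lt hu)).trans le_sup_left
  · intro N hN hNM
    obtain ⟨hNi, hNm, hNc⟩ := hNM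
    refine martingale_rcReg hHmono hHle ⟨hNi, fun t ht => (hNm t ht).mono le_sup_left le_rfl, ?_⟩ ?_
    · intro s t hs hst
      have ht := hs.trans hst
      have k1 : μ[N t|F s ⊔ MeasurableSpace.comap E inferInstance] =ᵐ[μ] N s :=
        condExp_sup_indep (hFFi s hs) hFi hσE hEindep (hNi t ht)
          ((hNm t ht).mono (hFFi t ht) le_rfl) (hNi s hs) (hNm s hs) (hNc s t hs hst)
      have k2 : μ[N t|(F s ⊔ MeasurableSpace.comap E inferInstance) ⊔
          MeasurableSpace.comap J inferInstance] =ᵐ[μ] N s :=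
        condExp_sup_indep (sup_le_sup_right (hFFi s hs) _) (sup_le hFi hσE) hσJ hJindep (hNi t ht)
          ((hNm t ht).mono ((hFFi t ht).trans le_sup_left) le_rfl) (hNi s hs)
          ((hNm s hs).mono le_sup_left le_rfl) k1
      have k3 := condExp_condExp_of_le (μ := μ) (f := N t) (hHK s hs)
        (sup_le (sup_le (hFle s) hσE) hσJ)
      refine k3.symm.trans ((condExp_congr_ae k2).trans ?_)
      have hNs : Measurable[H s] (N s) := (hNm s hs).mono le_sup_left le_rfl
      rw [condExp_of_stronglyMeasurable (hHle s hs) hNs.stronglyMeasurable (hNi s hs)]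
    · intro s hs
      exact ae_of_all _ fun ω => (hN ω s hs).mono_left (nhdsWithin_mono _ Ioi_subset_Ici_self)

end InvMarkovJump
end
end
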